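/- arXiv:2603.02113 — 3 statements merged into one kernel-verified Lean document; each statement's English description precedes it below -/
import Mathlib

section
/- Let (N, (A_i)_{i∈N}, (u_i)_{i∈N}) be a finite simultaneous-move game and let p = (p_i)_{i∈N} be a marginal strategy profile that is NOT compatible with any correlated equilibrium (i.e., there is no correlated equilibrium q whose marginal on each A_i equals p_i). Then there exist fee functions f_i : A_i → ℝ and stochastic kernels η_i : A_i → Δ(A_i) such that (1) for every action profile a ∈ ∏_i A_i, Σ_{i∈N} u_i(a) ≤ Σ_{i∈N} Σ_{a_i'∈A_i} η_i(a_i, a_i') u_i(a_i', a_{-i}) − Σ_{i∈N} f_i(a_i), and (2) Σ_{i∈N} Σ_{a_i∈A_i} p_i(a_i) f_i(a_i) > 0. -/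
open Finset

variable {N : Type*} [Fintype N] [Nonempty N] [DecidableEq N]
  {A : N → Type*} [∀ i, Fintype (A i)] [∀ i, Nonempty (A i)] [∀ i, DecidableEq (A i)]

/-- `p` is a marginal strategy profile: each `p i` is a probability distribution on `A i`. -/
def IsMarginalProfile (p : ∀ i, A i → ℝ) : Prop :=
  (∀ i (b : A i), 0 ≤ p i b) ∧ ∀ i, ∑ b : A i, p i b = 1

/-- `q` is a correlated equilibrium of the game with utilities `u`. -/
def IsCorrelatedEq (u : ∀ i : N, (∀ j, A j) → ℝ) (q : (∀ j, A j) → ℝ) : Prop :=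
  (∀ a, 0 ≤ q a) ∧ (∑ a : ∀ j, A j, q a = 1) ∧
    ∀ (i : N) (b b' : A i),
      0 ≤ ∑ a : ∀ j, A j,
            (if a i = b then q a * (u i a - u i (Function.update a i b')) else 0)

/-- The marginal of the joint distribution `q` on `A i`. -/
def marg (q : (∀ j, A j) → ℝ) (i : N) (b : A i) : ℝ :=
  ∑ a : ∀ j, A j, if a i = b then q a else 0

/-- Each row `η i b` is a probability distribution on `A i` (a stochastic kernel). -/
def IsKernel (η : ∀ i, A i → A i → ℝ) : Prop :=
  ∀ i (b : A i), (∀ b' : A i, 0 ≤ η i b b') ∧ ∑ b' : A i, η i b b' = 1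

/-!
Compatibility of `p` with a correlated equilibrium is a linear feasibility problem over the simplex
of joint distributions, and exploitability is its dual. If the problem is infeasible, Hahn–Banach
separates the compact image of the simplex from the cone `{0} × ℝ₊ᵏ`. This gives multipliers `F` for
the marginal constraints and `G ≥ 0` for the obedience constraints such that, at every action
profile `a`, the centred sum `∑ i, (F i (a i) - 𝔼_{p i} (F i))` lies strictly below the `G`-weighted
sum of deviation gains. Staying put has zero gain, so a small multiple of `G` can be completed on
the diagonal to a stochastic kernel without changing the gains; after the same rescaling, the
centred multipliers, raised by a small positive constant, are the fees.
-/

section Alternative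

open Matrix

variable {V J K : Type*} [Fintype V]

theorem exists_strongDual_nonneg_on_neg_of_forall_stdSimplex {E : Type*} [AddCommGroup E]
    [Module ℝ E] [TopologicalSpace E] [IsTopologicalAddGroup E] [ContinuousSMul ℝ E]
    [LocallyConvexSpace ℝ E] (C : ProperCone ℝ E) (v : V → E)
    (h : ∀ q ∈ stdSimplex ℝ V, ∑ a, q a • v a ∉ C) :
    ∃ φ : StrongDual ℝ E, (∀ x ∈ C, 0 ≤ φ x) ∧ ∀ a, φ (v a) < 0 := by
  classical
  let L := Fintype.linearCombination ℝ v
  have hconvex : Convex ℝ (L '' stdSimplex ℝ V) := (convex_stdSimplex ℝ V).linear_image L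
  have hcompact : IsCompact (L '' stdSimplex ℝ V) :=
    (isCompact_stdSimplex ℝ V).image L.continuous_of_finiteDimensional
  have hdisjoint : Disjoint (L '' stdSimplex ℝ V) C :=
    Set.disjoint_left.2 <| Set.forall_mem_image.2 h
  obtain ⟨φ, hφC, hφ⟩ := C.hyperplane_separation hconvex hcompact hdisjoint
  refine ⟨φ, hφC, fun a => ?_⟩
  simpa [L, Fintype.linearCombination_apply_single] using
    hφ _ (Set.mem_image_of_mem L (single_mem_stdSimplex ℝ a))

/-- A form of Motzkin's transposition theorem. -/
theorem exists_mulVec_add_mulVec_neg_of_forall_stdSimplex [Fintype J] [Fintype K]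
    (M : Matrix V J ℝ) (R : Matrix V K ℝ)
    (h : ∀ q ∈ stdSimplex ℝ V, q ᵥ* M = 0 → ¬ 0 ≤ q ᵥ* R) :
    ∃ (y : J → ℝ) (z : K → ℝ), 0 ≤ z ∧ ∀ a, (M *ᵥ y) a + (R *ᵥ z) a < 0 := by
  classical
  let C : ProperCone ℝ ((J → ℝ) × (K → ℝ)) :=
    (⊥ : ProperCone ℝ (J → ℝ)).comap (.fst ℝ _ _) ⊓
      (ProperCone.positive ℝ (K → ℝ)).comap (.snd ℝ _ _)
  have hC : ∀ q ∈ stdSimplex ℝ V, ∑ a, q a • (M a, R a) ∉ C := by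
    rintro q hq ⟨hM, hR⟩
    refine h q hq ?_ ?_
    · simpa [vecMul_eq_sum, Prod.fst_sum] using hM
    · simpa [vecMul_eq_sum, Prod.snd_sum] using hR
  obtain ⟨φ, hφC, hφ⟩ := exists_strongDual_nonneg_on_neg_of_forall_stdSimplex C _ hC
  obtain ⟨y, hy⟩ := (dotProductEquiv ℝ J).surjective (φ.comp (.inl ℝ (J → ℝ) (K → ℝ)))
  obtain ⟨z, hz⟩ := (dotProductEquiv ℝ K).surjective (φ.comp (.inr ℝ (J → ℝ) (K → ℝ)))
  replace hy : ∀ x, φ (x, 0) = x ⬝ᵥ y := fun x =>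
    (DFunLike.congr_fun hy x).symm.trans (dotProduct_comm y x)
  replace hz : ∀ x, φ (0, x) = x ⬝ᵥ z := fun x =>
    (DFunLike.congr_fun hz x).symm.trans (dotProduct_comm z x)
  refine ⟨y, z, fun k => ?_, fun a => ?_⟩
  · have hmem : ((0, Pi.single k 1) : (J → ℝ) × (K → ℝ)) ∈ C :=
      ⟨rfl, Pi.single_nonneg.2 zero_le_one⟩
    simpa [hz] using hφC _ hmem
  · calc (M *ᵥ y) a + (R *ᵥ z) a = φ (M a, 0) + φ (0, R a) := by
          simp only [hy, hz, mulVec]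
      _ = φ (M a, R a) := by simp [← map_add]
      _ < 0 := hφ a

end Alternative

section Kernel

variable {α R : Type*} [Fintype α] [DecidableEq α]

/-- The completion of a substochastic kernel to a stochastic one: the mass missing from a row is
placed on the diagonal, i.e. the chain stays put with the remaining probability. -/
def stochasticCompletion [Ring R] (k : α → α → R) (b : α) : α → R :=
  k b + Pi.single b (1 - ∑ c, k b c)

theorem sum_stochasticCompletion_mul [Ring R] (k : α → α → R) (b : α) (g : α → R) :
    ∑ c, stochasticCompletion k b c * g c = ∑ c, k b c * g c + (1 - ∑ c, k b c) * g b := by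
  simp [stochasticCompletion, add_mul, sum_add_distrib, Pi.single_apply]

theorem sum_stochasticCompletion [Ring R] (k : α → α → R) (b : α) :
    ∑ c, stochasticCompletion k b c = 1 := by
  simpa using sum_stochasticCompletion_mul k b 1

theorem stochasticCompletion_nonneg [Ring R] [PartialOrder R] [IsOrderedAddMonoid R]
    {k : α → α → R} {b : α} (hk : ∀ c, 0 ≤ k b c) (hsum : ∑ c, k b c ≤ 1) (c : α) :
    0 ≤ stochasticCompletion k b c := by
  have hdiag : (0 : α → R) ≤ Pi.single b (1 - ∑ c, k b c) :=
    Pi.single_nonneg.2 (sub_nonneg.2 hsum)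
  exact add_nonneg (hk c) (hdiag c)

end Kernel

section FiniteFamily

variable {α R : Type*}

theorem exists_pos_forall_mul_le_one [Finite α] [Field R] [LinearOrder R] [IsStrictOrderedRing R]
    (r : α → R) : ∃ ε, 0 < ε ∧ ∀ x, ε * r x ≤ 1 := by
  obtain ⟨B, hB⟩ := Finite.exists_le r
  obtain ⟨ε, hε, hεB⟩ := exists_pos_mul_lt one_pos B
  refine ⟨ε, hε, fun x => ?_⟩
  calc ε * r x ≤ ε * B := by gcongr; exact hB x
    _ ≤ 1 := by rw [mul_comm]; exact hεB.le

theorem sum_mul_sub_sum_mul_add [Fintype α] [Ring R] {w : α → R} (hw : ∑ x, w x = 1)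
    (g : α → R) (t : R) : ∑ x, w x * (g x - ∑ y, w y * g y + t) = t := by
  simp [mul_add, mul_sub, sum_add_distrib, sum_sub_distrib, ← sum_mul, hw]

end FiniteFamily

section Game

open Matrix

variable {I : Type*} {S : I → Type*}

/-- The constraint matrix for the marginals to equal `p`. Subtracting `p` makes the constraint
homogeneous on the simplex of joint distributions. -/
def marginalMatrix [∀ i, DecidableEq (S i)] (p : ∀ i, S i → ℝ) : Matrix (∀ i, S i) (Σ i, S i) ℝ :=
  .of fun a s => (if a s.1 = s.2 then 1 else 0) - p s.1 s.2

theorem marginalMatrix_mulVec [Fintype I] [∀ i, Fintype (S i)] [∀ i, DecidableEq (S i)]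
    (p : ∀ i, S i → ℝ) (F : (Σ i, S i) → ℝ) (a : ∀ i, S i) :
    (marginalMatrix p *ᵥ F) a = ∑ i, (F ⟨i, a i⟩ - ∑ b, p i b * F ⟨i, b⟩) := by
  simp [mulVec, dotProduct, marginalMatrix, Fintype.sum_sigma, sub_mul, sum_sub_distrib]

variable [DecidableEq I]

/-- The gain of player `i` from playing `b` instead of `a i` when the others play as in `a`. -/
def deviationGain (u : I → (∀ j, S j) → ℝ) (i : I) (a : ∀ j, S j) (b : S i) : ℝ :=
  u i (Function.update a i b) - u i a

@[simp]
theorem deviationGain_self (u : I → (∀ j, S j) → ℝ) (i : I) (a : ∀ j, S j) :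
    deviationGain u i a (a i) = 0 := by
  simp [deviationGain]

theorem sum_kernel_mul_update [∀ i, Fintype (S i)] {η : ∀ i, S i → S i → ℝ} (hη : IsKernel η)
    (u : I → (∀ j, S j) → ℝ) (i : I) (a : ∀ j, S j) :
    ∑ b, η i (a i) b * u i (Function.update a i b) =
      u i a + ∑ b, η i (a i) b * deviationGain u i a b := by
  simp [deviationGain, mul_sub, sum_sub_distrib, ← sum_mul, (hη i (a i)).2]

variable [∀ i, DecidableEq (S i)]

/-- The constraint matrix for correlated equilibria: the column of `⟨i, b, b'⟩` holds the loss of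
player `i` from switching to `b'` when recommended `b`. -/
def obedienceMatrix (u : I → (∀ j, S j) → ℝ) : Matrix (∀ i, S i) (Σ i, S i × S i) ℝ :=
  .of fun a s => if a s.1 = s.2.1 then -deviationGain u s.1 a s.2.2 else 0

variable [Fintype I] [∀ i, Fintype (S i)]

theorem vecMul_marginalMatrix {q : (∀ j, S j) → ℝ} (hq : ∑ a, q a = 1) (p : ∀ i, S i → ℝ)
    (i : I) (b : S i) : (q ᵥ* marginalMatrix p) ⟨i, b⟩ = marg q i b - p i b := by
  simp [vecMul, dotProduct, marginalMatrix, marg, mul_sub, sum_sub_distrib, ← sum_mul, hq]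

theorem vecMul_obedienceMatrix (q : (∀ j, S j) → ℝ) (u : I → (∀ j, S j) → ℝ)
    (i : I) (b b' : S i) :
    (q ᵥ* obedienceMatrix u) ⟨i, b, b'⟩ =
      ∑ a, if a i = b then q a * (u i a - u i (Function.update a i b')) else 0 := by
  simp [vecMul, dotProduct, obedienceMatrix, deviationGain]

theorem obedienceMatrix_mulVec (u : I → (∀ j, S j) → ℝ) (G : (Σ i, S i × S i) → ℝ)
    (a : ∀ i, S i) :
    (obedienceMatrix u *ᵥ G) a = -∑ i, ∑ b, G ⟨i, a i, b⟩ * deviationGain u i a b := by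
  simp [mulVec, dotProduct, obedienceMatrix, Fintype.sum_sigma, Fintype.sum_prod_type_right,
    mul_comm]

theorem exists_multipliers_of_not_compatible {u : I → (∀ j, S j) → ℝ} {p : ∀ i, S i → ℝ}
    (hnc : ¬ ∃ q, IsCorrelatedEq u q ∧ ∀ i (b : S i), marg q i b = p i b) :
    ∃ (F : ∀ i, S i → ℝ) (G : ∀ i, S i → S i → ℝ), (∀ i b, 0 ≤ G i b) ∧
      ∀ a : ∀ i, S i, ∑ i, (F i (a i) - ∑ b, p i b * F i b) <
        ∑ i, ∑ b, G i (a i) b * deviationGain u i a b := by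
  have infeasible : ∀ q ∈ stdSimplex ℝ (∀ i, S i), q ᵥ* marginalMatrix p = 0 →
      ¬ 0 ≤ q ᵥ* obedienceMatrix u := by
    rintro q ⟨hq0, hq1⟩ hmarg hobey
    refine hnc ⟨q, ⟨hq0, hq1, fun i b b' => ?_⟩, fun i b => ?_⟩
    · rw [← vecMul_obedienceMatrix]
      exact hobey ⟨i, b, b'⟩
    · rw [← sub_eq_zero, ← vecMul_marginalMatrix hq1, hmarg, Pi.zero_apply]
  obtain ⟨F, G, hG, hFG⟩ := exists_mulVec_add_mulVec_neg_of_forall_stdSimplex _ _ infeasible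
  refine ⟨fun i b => F ⟨i, b⟩, fun i b b' => G ⟨i, b, b'⟩, fun i b b' => hG _, fun a => ?_⟩
  simpa only [marginalMatrix_mulVec, obedienceMatrix_mulVec, ← sub_eq_add_neg, sub_neg] using hFG a

theorem exists_kernel_of_not_compatible {u : I → (∀ j, S j) → ℝ} {p : ∀ i, S i → ℝ}
    (hnc : ¬ ∃ q, IsCorrelatedEq u q ∧ ∀ i (b : S i), marg q i b = p i b) :
    ∃ (F : ∀ i, S i → ℝ) (η : ∀ i, S i → S i → ℝ), IsKernel η ∧
      ∀ a : ∀ i, S i, ∑ i, (F i (a i) - ∑ b, p i b * F i b) <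
        ∑ i, ∑ b, η i (a i) b * deviationGain u i a b := by
  obtain ⟨F, G, hG, hFG⟩ := exists_multipliers_of_not_compatible hnc
  obtain ⟨ε, hε, hrow⟩ :=
    exists_pos_forall_mul_le_one fun s : Σ i, S i => ∑ b, G s.1 s.2 b
  have hkernel : IsKernel fun i => stochasticCompletion (ε • G i) := fun i b =>
    have hsum : ∑ b', (ε • G i) b b' ≤ 1 := by simpa [mul_sum] using hrow ⟨i, b⟩
    ⟨stochasticCompletion_nonneg (fun b' => mul_nonneg hε.le (hG i b b')) hsum,
      sum_stochasticCompletion _ b⟩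
  have hgain (i : I) (a : ∀ j, S j) :
      ∑ b, stochasticCompletion (ε • G i) (a i) b * deviationGain u i a b =
        ε * ∑ b, G i (a i) b * deviationGain u i a b := by
    simp [sum_stochasticCompletion_mul, mul_sum, mul_assoc]
  refine ⟨ε • F, _, hkernel, fun a => ?_⟩
  calc ∑ i, ((ε • F) i (a i) - ∑ b, p i b * (ε • F) i b)
      = ε * ∑ i, (F i (a i) - ∑ b, p i b * F i b) := by
        simp [mul_sum, mul_sub, mul_left_comm]
    _ < ε * ∑ i, ∑ b, G i (a i) b * deviationGain u i a b :=
        mul_lt_mul_of_pos_left (hFG a) hε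
    _ = ∑ i, ∑ b, stochasticCompletion (ε • G i) (a i) b * deviationGain u i a b := by
        simp only [hgain, mul_sum]

end Game

theorem not_compatible_implies_exploitable
    (u : ∀ i : N, (∀ j, A j) → ℝ) (p : ∀ i, A i → ℝ) (hp : IsMarginalProfile p)
    (hnc : ¬ ∃ q : (∀ j, A j) → ℝ,
      IsCorrelatedEq u q ∧ ∀ i (b : A i), marg q i b = p i b) :
    ∃ (f : ∀ i, A i → ℝ) (η : ∀ i, A i → A i → ℝ),
      IsKernel η ∧
      (∀ a : ∀ j, A j,
        ∑ i, u i a ≤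
          (∑ i, ∑ b' : A i, η i (a i) b' * u i (Function.update a i b')) -
            ∑ i, f i (a i)) ∧
      0 < ∑ i, ∑ b : A i, p i b * f i b := by
  obtain ⟨F, η, hη, hgain⟩ := exists_kernel_of_not_compatible hnc
  obtain ⟨δ, hδ, hslack⟩ := Pi.exists_forall_pos_add_lt hgain
  let t : ℝ := δ / Fintype.card N
  have sum_t : ∑ _i : N, t = δ := by simp [t, mul_div_cancel₀]
  refine ⟨fun i b => F i b - ∑ c, p i c * F i c + t, η, hη, fun a => ?_, ?_⟩
  · simp only [sum_kernel_mul_update hη, sum_add_distrib, sum_t]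
    linarith [hslack a]
  · calc 0 < ∑ _i : N, t := by rwa [sum_t]
      _ = ∑ i, ∑ b, p i b * (F i b - ∑ c, p i c * F i c + t) :=
        sum_congr rfl fun i _ => (sum_mul_sub_sum_mul_add (hp.2 i) (F i) t).symm
end

section
/- Let (N, (A_i)_{i∈N}, (u_i)_{i∈N}) be a finite simultaneous-move game and let p = (p_i)_{i∈N} be a marginal strategy profile. Then p is a Nash equilibrium (i.e., for every player i and all a_i, a_i' ∈ A_i with p_i(a_i) > 0, Σ_{a_{-i}} (∏_{j≠i} p_j(a_j)) [u_i(a_i, a_{-i}) − u_i(a_i', a_{-i})] ≥ 0) if and only if p is unexploitable by profile-wise transfer schemes (i.e., there do not exist a fee function f : ∏_i A_i → ℝ and stochastic kernels η_i : A_i → Δ(A_i), one for each player i, such that (1) for every action profile a ∈ ∏_i A_i, Σ_{i∈N} u_i(a) ≤ Σ_{i∈N} Σ_{a_i'∈A_i} η_i(a_i, a_i') u_i(a_i', a_{-i}) − f(a), and (2) Σ_{a∈∏_i A_i} (∏_{i∈N} p_i(a_i)) f(a) > 0). -/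
open Finset

variable {N : Type*} [Fintype N] [Nonempty N] [DecidableEq N]
  {A : N → Type*} [∀ i, Fintype (A i)] [∀ i, Nonempty (A i)] [∀ i, DecidableEq (A i)]

/-- `p` is a Nash equilibrium of the game with utilities `u`. -/
def IsNashEq (u : ∀ i : N, (∀ j, A j) → ℝ) (p : ∀ i, A i → ℝ) : Prop :=
  ∀ (i : N) (b b' : A i), 0 < p i b →
    0 ≤ ∑ a : ∀ j, A j,
          (if a i = b then
            (∏ j ∈ Finset.univ.erase i, p j (a j)) * (u i a - u i (Function.update a i b'))
          else 0)

/-!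
For a fixed kernel profile `η` the best fee is the surplus that `η` creates, so `p` is exploitable
exactly when some `η` has positive expected surplus under the product of the `p i`. Utilities are
compared only under deviations by one player at a time, so the expected surplus is minus the sum of
the one-player losses `p i b * deviationLoss u p i b b'` with weights `η i b b' ≥ 0`. Hence it is
nonpositive for every `η` iff all these losses are nonnegative, which is the Nash condition: a
kernel that deviates at a single action of a single player isolates each loss.
-/

section Exploitability

omit [Nonempty N] [∀ i, Nonempty (A i)]

/-- The quantity that `IsNashEq` requires to be nonnegative: the expected loss of player `i` when
replacing action `b` by `b'` against opponents playing `p`. -/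
def deviationLoss (u : N → (∀ j, A j) → ℝ) (p : ∀ i, A i → ℝ) (i : N) (b b' : A i) : ℝ :=
  ∑ a : ∀ j, A j,
    if a i = b then
      (∏ j ∈ univ.erase i, p j (a j)) * (u i a - u i (Function.update a i b'))
    else 0

/-- The expected total utility gain at the profile `a` when every player `i` separately
re-randomizes `a i` by the kernel `η i`, the others keeping their actions. -/
def kernelSurplus (u : N → (∀ j, A j) → ℝ) (η : ∀ i, A i → A i → ℝ) (a : ∀ j, A j) : ℝ :=
  (∑ i, ∑ b' : A i, η i (a i) b' * u i (Function.update a i b')) - ∑ i, u i a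

/-- The deterministic kernel profile that moves the mass at `b : A i` to `d i b`. -/
def pureKernel (d : ∀ i, A i → A i) (i : N) (b b' : A i) : ℝ :=
  if d i b = b' then 1 else 0

/-- The deviation in which only player `i` changes an action, playing `c` in place of `b`. -/
def singleDeviation (i : N) (b c : A i) : ∀ j, A j → A j :=
  Function.update (fun _ => id) i (Function.update id b c)

variable (u : N → (∀ j, A j) → ℝ) {p : ∀ i, A i → ℝ} {η : ∀ i, A i → A i → ℝ}

theorem deviationLoss_self (p : ∀ i, A i → ℝ) (i : N) (b : A i) :
    deviationLoss u p i b b = 0 := by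
  refine sum_eq_zero fun a _ => ite_eq_right_iff.mpr ?_
  rintro rfl
  rw [Function.update_eq_self, sub_self, mul_zero]

theorem isNashEq_iff_mul_deviationLoss_nonneg (hp : ∀ i b, 0 ≤ p i b) :
    IsNashEq u p ↔ ∀ i b b', 0 ≤ p i b * deviationLoss u p i b b' := by
  refine forall₃_congr fun i b b' => ⟨fun hloss => ?_, fun hloss hb => ?_⟩
  · rcases (hp i b).eq_or_lt with hb | hb
    · rw [← hb, zero_mul]
    · exact mul_nonneg hb.le (hloss hb)
  · exact (mul_nonneg_iff_of_pos_left hb).mp hloss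

theorem sum_mul_deviationLoss (p : ∀ i, A i → ℝ) (i : N) (w : A i → A i → ℝ) :
    ∑ b, ∑ b', w b b' * deviationLoss u p i b b' =
      ∑ a : ∀ j, A j, (∏ j ∈ univ.erase i, p j (a j)) *
        ∑ b', w (a i) b' * (u i a - u i (Function.update a i b')) := by
  simp only [deviationLoss, mul_sum, mul_ite, mul_zero]
  simp_rw [sum_comm (t := (univ : Finset (∀ j, A j)))]
  refine sum_congr rfl fun a _ => ?_
  rw [sum_comm]
  refine sum_congr rfl fun b' _ => ?_
  rw [Fintype.sum_ite_eq, mul_left_comm]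

omit [∀ i, DecidableEq (A i)] in
theorem kernelSurplus_eq_neg_sum (hη : IsKernel η) (a : ∀ j, A j) :
    kernelSurplus u η a =
      -∑ i, ∑ b', η i (a i) b' * (u i a - u i (Function.update a i b')) := by
  simp only [kernelSurplus, mul_sub, sum_sub_distrib, ← sum_mul, (hη _ _).2, one_mul, neg_sub]

theorem sum_prod_mul_kernelSurplus (p : ∀ i, A i → ℝ) (hη : IsKernel η) :
    ∑ a : ∀ j, A j, (∏ i, p i (a i)) * kernelSurplus u η a =
      -∑ i, ∑ b, ∑ b', η i b b' * (p i b * deviationLoss u p i b b') := by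
  simp_rw [kernelSurplus_eq_neg_sum u hη, mul_neg, sum_neg_distrib,
    mul_sum (s := (univ : Finset N)), ← mul_assoc, sum_mul_deviationLoss]
  rw [sum_comm]
  refine congrArg Neg.neg (sum_congr rfl fun i _ => sum_congr rfl fun a _ => ?_)
  rw [← prod_erase_mul univ (fun j => p j (a j)) (mem_univ i), mul_assoc, mul_sum]
  exact congrArg _ (sum_congr rfl fun b' _ => by ring)

omit [Fintype N] [DecidableEq N] in
theorem isKernel_pureKernel (d : ∀ i, A i → A i) : IsKernel (pureKernel d) :=
  fun i b => ⟨fun b' => by unfold pureKernel; positivity, Fintype.sum_ite_eq (d i b) fun _ => 1⟩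

theorem sum_singleDeviation {M : Type*} [AddCommMonoid M] (g : ∀ i, A i → A i → M)
    (hg : ∀ i b, g i b b = 0) (i : N) (b c : A i) :
    ∑ j, ∑ b', g j b' (singleDeviation i b c j b') = g i b c := by
  rw [Fintype.sum_eq_single i, Fintype.sum_eq_single b]
  · simp [singleDeviation]
  · intro b' hb'
    simp [singleDeviation, hb', hg]
  · intro j hj
    simp [singleDeviation, hj, hg]

theorem sum_prod_mul_kernelSurplus_singleDeviation (p : ∀ i, A i → ℝ) (i : N) (b c : A i) :
    ∑ a : ∀ j, A j, (∏ j, p j (a j)) * kernelSurplus u (pureKernel (singleDeviation i b c)) a =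
      -(p i b * deviationLoss u p i b c) := by
  rw [sum_prod_mul_kernelSurplus u p (isKernel_pureKernel _)]
  simp only [pureKernel, ite_mul, one_mul, zero_mul, Fintype.sum_ite_eq]
  rw [sum_singleDeviation (fun j b' c' => p j b' * deviationLoss u p j b' c')]
  exact fun j b' => by rw [deviationLoss_self, mul_zero]

theorem isNashEq_iff_sum_kernelSurplus_nonpos (hp : ∀ i b, 0 ≤ p i b) :
    IsNashEq u p ↔ ∀ η, IsKernel η →
      ∑ a : ∀ j, A j, (∏ i, p i (a i)) * kernelSurplus u η a ≤ 0 := by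
  rw [isNashEq_iff_mul_deviationLoss_nonneg u hp]
  constructor
  · intro hloss η hη
    rw [sum_prod_mul_kernelSurplus u p hη, neg_nonpos]
    exact sum_nonneg fun i _ => sum_nonneg fun b _ => sum_nonneg fun b' _ =>
      mul_nonneg ((hη i b).1 b') (hloss i b b')
  · intro hsurplus i b c
    have hdev := hsurplus _ (isKernel_pureKernel (singleDeviation i b c))
    rwa [sum_prod_mul_kernelSurplus_singleDeviation, neg_nonpos] at hdev

omit [∀ i, DecidableEq (A i)] in
theorem exists_fee_iff_sum_kernelSurplus_pos (hp : ∀ i b, 0 ≤ p i b) :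
    (∃ f : (∀ j, A j) → ℝ,
      (∀ a, ∑ i, u i a ≤
        (∑ i, ∑ b', η i (a i) b' * u i (Function.update a i b')) - f a) ∧
      0 < ∑ a : ∀ j, A j, (∏ i, p i (a i)) * f a) ↔
    0 < ∑ a : ∀ j, A j, (∏ i, p i (a i)) * kernelSurplus u η a := by
  constructor
  · rintro ⟨f, hf, hpos⟩
    exact hpos.trans_le <| sum_le_sum fun a _ =>
      mul_le_mul_of_nonneg_left (le_sub_comm.mp (hf a)) (prod_nonneg fun i _ => hp i (a i))
  · exact fun hpos => ⟨kernelSurplus u η, fun a => (sub_sub_cancel _ _).ge, hpos⟩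

end Exploitability

theorem nash_iff_unexploitable_profilewise
    (u : ∀ i : N, (∀ j, A j) → ℝ) (p : ∀ i, A i → ℝ) (hp : IsMarginalProfile p) :
    IsNashEq u p ↔
      ¬ ∃ (f : (∀ j, A j) → ℝ) (η : ∀ i, A i → A i → ℝ),
          IsKernel η ∧
          (∀ a : ∀ j, A j,
            ∑ i, u i a ≤
              (∑ i, ∑ b' : A i, η i (a i) b' * u i (Function.update a i b')) - f a) ∧
          0 < ∑ a : ∀ j, A j, (∏ i, p i (a i)) * f a := by
  rw [isNashEq_iff_sum_kernelSurplus_nonpos u hp.1, exists_comm]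
  simp_rw [exists_and_left, exists_fee_iff_sum_kernelSurplus_pos u hp.1, not_exists, not_and,
    not_lt]
end

section
/- Let (N, (A_i)_{i∈N}, (u_i)_{i∈N}) be a finite simultaneous-move game and let p = (p_i)_{i∈N} be a marginal strategy profile. Suppose there exist fee functions f_i : A_i → ℝ and stochastic kernels η_i : A_i → Δ(A_i) such that (1) for every a ∈ ∏_i A_i, Σ_{i∈N}[u_i(a) + f_i(a_i)] ≤ Σ_{i∈N} Σ_{a_i'} η_i(a_i, a_i') u_i(a_i', a_{-i}), and (2) Σ_{i∈N} Σ_{a_i} p_i(a_i) f_i(a_i) > 0. Then for EVERY joint distribution q on ∏_i A_i whose marginal on each A_i equals p_i, the observer's expected fee is positive under q and the pointwise inequality yields Σ_{i∈N} Σ_a q(a) f_i(a_i) > 0; in particular, q cannot be a correlated equilibrium. -/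
/-!
A kernel `η i` is a mixture of the deviations that answer one recommendation `b` with one
alternative `b'`, so the incentive constraints of a correlated equilibrium, summed with weights
`η i b b'`, make it unprofitable in expectation. Averaging the pointwise inequality over the
equilibrium then bounds the expected fee by the sum of the expected deviation gains, which is
nonpositive. But the fee of player `i` depends only on the action of player `i`, so the expected fee
is determined by the marginals, for which it is positive.
-/

open Finset

variable {N : Type*} [Fintype N] [Nonempty N] [DecidableEq N]
  {A : N → Type*} [∀ i, Fintype (A i)] [∀ i, Nonempty (A i)] [∀ i, DecidableEq (A i)]

section

omit [Nonempty N] [∀ i, Nonempty (A i)]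

/-- The expected value of the utility `v` when player `i` follows the stochastic deviation `k`, that
is, replaces the recommended action `a i` by one drawn from `k (a i)`, at the profile `a`. -/
def deviationUtility (i : N) (v : (∀ j, A j) → ℝ) (k : A i → A i → ℝ) (a : ∀ j, A j) : ℝ :=
  ∑ b', k (a i) b' * v (Function.update a i b')

theorem sum_marg_mul (q : (∀ j, A j) → ℝ) (i : N) (g : A i → ℝ) :
    ∑ b, marg q i b * g b = ∑ a, q a * g (a i) := by
  simp only [marg, sum_mul, ite_mul, zero_mul]
  rw [sum_comm]
  simp only [sum_ite_eq, mem_univ, if_true]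

omit [Fintype N] [∀ i, DecidableEq (A i)] in
theorem sub_deviationUtility (i : N) (v : (∀ j, A j) → ℝ) {k : A i → A i → ℝ} {a : ∀ j, A j}
    (hk : ∑ b', k (a i) b' = 1) :
    v a - deviationUtility i v k a = ∑ b', k (a i) b' * (v a - v (Function.update a i b')) := by
  simp only [deviationUtility, mul_sub, sum_sub_distrib, ← sum_mul, hk, one_mul]

theorem sum_mul_sub_deviationUtility (q : (∀ j, A j) → ℝ) (i : N) (v : (∀ j, A j) → ℝ)
    {k : A i → A i → ℝ} (hk : ∀ b, ∑ b', k b b' = 1) :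
    ∑ a, q a * (v a - deviationUtility i v k a) =
      ∑ b, ∑ b', k b b' *
        ∑ a, if a i = b then q a * (v a - v (Function.update a i b')) else 0 := by
  calc ∑ a, q a * (v a - deviationUtility i v k a)
      = ∑ a, ∑ b', k (a i) b' * (q a * (v a - v (Function.update a i b'))) := by
        simp only [sub_deviationUtility i v (hk _), mul_sum, mul_left_comm]
    _ = ∑ b', ∑ a, ∑ b,
          if a i = b then k b b' * (q a * (v a - v (Function.update a i b'))) else 0 := by
        rw [sum_comm]
        simp only [sum_ite_eq, mem_univ, if_true]
    _ = ∑ b', ∑ b, k b b' *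
          ∑ a, if a i = b then q a * (v a - v (Function.update a i b')) else 0 := by
        simp only [mul_sum, mul_ite, mul_zero]
        exact sum_congr rfl fun b' _ => sum_comm
    _ = _ := sum_comm

namespace IsCorrelatedEq

variable {u : N → (∀ j, A j) → ℝ} {q : (∀ j, A j) → ℝ}

theorem sum_mul_deviationUtility_le (hq : IsCorrelatedEq u q) (i : N) {k : A i → A i → ℝ}
    (hk_nonneg : ∀ b b', 0 ≤ k b b') (hk_sum : ∀ b, ∑ b', k b b' = 1) :
    ∑ a, q a * deviationUtility i (u i) k a ≤ ∑ a, q a * u i a := by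
  rw [← sub_nonneg, ← sum_sub_distrib]
  simp only [← mul_sub]
  rw [sum_mul_sub_deviationUtility q i (u i) hk_sum]
  exact sum_nonneg fun b _ => sum_nonneg fun b' _ => mul_nonneg (hk_nonneg b b') (hq.2.2 i b b')

theorem sum_mul_nonpos_of_sum_add_le_deviationUtility (hq : IsCorrelatedEq u q)
    {η : ∀ i, A i → A i → ℝ} (hη : IsKernel η) {g : (∀ j, A j) → ℝ}
    (hg : ∀ a, ∑ i, u i a + g a ≤ ∑ i, deviationUtility i (u i) (η i) a) :
    ∑ a, q a * g a ≤ 0 := by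
  have averaged : ∑ i, ∑ a, q a * u i a + ∑ a, q a * g a ≤
      ∑ i, ∑ a, q a * deviationUtility i (u i) (η i) a := by
    have weighted := sum_le_sum fun a (_ : a ∈ univ) => mul_le_mul_of_nonneg_left (hg a) (hq.1 a)
    simp only [mul_add, mul_sum, sum_add_distrib] at weighted
    rwa [sum_comm, sum_comm (f := fun a i => q a * deviationUtility i (u i) (η i) a)] at weighted
  have unprofitable : ∑ i, ∑ a, q a * deviationUtility i (u i) (η i) a ≤
      ∑ i, ∑ a, q a * u i a :=
    sum_le_sum fun i _ =>
      hq.sum_mul_deviationUtility_le i (fun b => (hη i b).1) fun b => (hη i b).2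
  linarith

end IsCorrelatedEq

end

theorem exploitation_rules_out_all_consistent_CE
    (u : ∀ i : N, (∀ j, A j) → ℝ) (p : ∀ i, A i → ℝ) (hp : IsMarginalProfile p)
    (f : ∀ i, A i → ℝ) (η : ∀ i, A i → A i → ℝ) (hη : IsKernel η)
    (h1 : ∀ a : ∀ j, A j,
      ∑ i, (u i a + f i (a i)) ≤
        ∑ i, ∑ b' : A i, η i (a i) b' * u i (Function.update a i b'))
    (h2 : 0 < ∑ i, ∑ b : A i, p i b * f i b) :
    ∀ q : (∀ j, A j) → ℝ, (∀ a, 0 ≤ q a) → (∑ a : ∀ j, A j, q a = 1) →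
      (∀ i (b : A i), marg q i b = p i b) →
      (0 < ∑ i, ∑ a : ∀ j, A j, q a * f i (a i)) ∧ ¬ IsCorrelatedEq u q := by
  intro q _ _ hmarg
  have fee_pos : 0 < ∑ i, ∑ a : ∀ j, A j, q a * f i (a i) := by
    simpa only [← sum_marg_mul, hmarg] using h2
  refine ⟨fee_pos, fun hq => fee_pos.not_ge ?_⟩
  have fee_nonpos : ∑ a, q a * ∑ i, f i (a i) ≤ 0 :=
    hq.sum_mul_nonpos_of_sum_add_le_deviationUtility hη fun a => by
      simpa only [sum_add_distrib, deviationUtility] using h1 a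
  simp only [mul_sum] at fee_nonpos
  rwa [sum_comm] at fee_nonpos
end
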